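/- arXiv:2212.14414 — 5 statements merged into one kernel-verified Lean document; each statement's English description precedes it below -/
import Mathlib

section
/- If γ = Ĉ‖f‖_*/ν² < 1, then the abstract Navier–Stokes variational problem admits exactly one solution (u,p) ∈ V × Q. -/
/-!
Testing the momentum equation against the kernel `Z = ker b` eliminates the pressure. What remains
is a quasilinear problem `A(u)u = f` on `Z`, where `A(w) = a + c(w; ·, ·)` is `ν`-coercive because
the skew-symmetry of `c` cancels the convective term on the diagonal. By Lax–Milgram the linearized
problem `A(w)u = f` has a unique solution `u = T(w)`, with `‖T(w)‖ ≤ ‖f‖ / ν`. Subtracting the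
equations for `w₁` and `w₂` shows that `T` is Lipschitz with constant `γ`, so Banach's theorem
gives the velocity. The residual of the momentum equation then vanishes on `Z`, and the inf-sup
condition makes `q ↦ b(·, q)` injective with closed range, which is therefore the annihilator
of `Z`: the residual is `b(·, p)` for exactly one pressure `p`.
-/

open scoped NNReal

section Dual

theorem mul_norm_le_norm_of_mul_norm_sq_le_apply {E : Type*} [SeminormedAddCommGroup E]
    [NormedSpace ℝ E] {ν : ℝ} {ℓ : StrongDual ℝ E} {u : E} (h : ν * ‖u‖ ^ 2 ≤ ℓ u) :
    ν * ‖u‖ ≤ ‖ℓ‖ := by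
  rcases (norm_nonneg u).eq_or_lt with hu | hu
  · simp [← hu]
  · refine le_of_mul_le_mul_right ?_ hu
    calc ν * ‖u‖ * ‖u‖ = ν * ‖u‖ ^ 2 := by ring
      _ ≤ ℓ u := h
      _ ≤ ‖ℓ‖ * ‖u‖ := (le_abs_self _).trans (ℓ.le_opNorm u)

theorem iSup_apply_div_norm_le_norm {E : Type*} [NormedAddCommGroup E] [NormedSpace ℝ E]
    (ℓ : StrongDual ℝ E) : ⨆ v : {v : E // v ≠ 0}, ℓ v / ‖(v : E)‖ ≤ ‖ℓ‖ := by
  refine Real.iSup_le (fun v ↦ ?_) (norm_nonneg ℓ)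
  rw [div_le_iff₀ (norm_pos_iff.2 v.2)]
  exact (le_abs_self _).trans (ℓ.le_opNorm v)

theorem mem_of_isClosed_of_forall_apply_eq_zero {𝕜 E : Type*} [RCLike 𝕜] [NormedAddCommGroup E]
    [InnerProductSpace 𝕜 E] [CompleteSpace E] {M : Submodule 𝕜 (StrongDual 𝕜 E)}
    (hM : IsClosed (M : Set (StrongDual 𝕜 E))) {g : StrongDual 𝕜 E}
    (hg : ∀ v, (∀ ℓ ∈ M, ℓ v = 0) → g v = 0) : g ∈ M := by
  let R := InnerProductSpace.toDual 𝕜 E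
  let N : Submodule 𝕜 E := M.comap R.toLinearEquiv.toLinearMap
  have hN : IsClosed (N : Set E) := hM.preimage R.continuous
  have := hN.completeSpace_coe
  suffices R.symm g ∈ N by simpa [N] using this
  rw [← N.orthogonal_orthogonal, Submodule.mem_orthogonal']
  intro v hv
  rw [InnerProductSpace.toDual_symm_apply]
  refine hg v fun ℓ hℓ ↦ ?_
  rw [← InnerProductSpace.toDual_symm_apply (𝕜 := 𝕜)]
  exact hv _ (by simpa [N, R] using hℓ)

end Dual

section MixedProblem

variable {𝕜 V Q : Type*} [RCLike 𝕜] [NormedAddCommGroup V] [InnerProductSpace 𝕜 V]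
  [CompleteSpace V] [NormedAddCommGroup Q] [NormedSpace 𝕜 Q] [CompleteSpace Q]
  {b : V →L[𝕜] Q →L[𝕜] 𝕜} {β : ℝ}

theorem existsUnique_flip_apply_eq (hβ : 0 < β) (hb : ∀ q, β * ‖q‖ ≤ ‖b.flip q‖)
    {g : StrongDual 𝕜 V} (hg : ∀ v ∈ b.ker, g v = 0) : ∃! p, b.flip p = g := by
  have hanti : AntilipschitzWith (Real.toNNReal β⁻¹) b.flip :=
    b.flip.antilipschitz_of_bound fun q ↦ by
      rw [Real.coe_toNNReal _ (by positivity), inv_mul_eq_div, le_div_iff₀' hβ]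
      exact hb q
  have hclosed : IsClosed (b.flip.range : Set (StrongDual 𝕜 V)) :=
    hanti.isClosed_range b.flip.uniformContinuous
  obtain ⟨p, hp⟩ : g ∈ b.flip.range :=
    mem_of_isClosed_of_forall_apply_eq_zero hclosed fun v hv ↦
      hg v (ContinuousLinearMap.ext fun q ↦ hv _ ⟨q, rfl⟩)
  exact ⟨p, hp, fun q hq ↦ hanti.injective (hq.trans hp.symm)⟩

theorem existsUnique_mixed_of_existsUnique_ker (hβ : 0 < β) (hb : ∀ q, β * ‖q‖ ≤ ‖b.flip q‖)
    {N : V → StrongDual 𝕜 V} {f : StrongDual 𝕜 V}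
    (hN : ∃! u : b.ker, ∀ v ∈ b.ker, N u v = f v) :
    ∃! up : V × Q, N up.1 + b.flip up.2 = f ∧ b up.1 = 0 := by
  obtain ⟨u, hu, hu_unique⟩ := hN
  obtain ⟨p, hp, hp_unique⟩ := existsUnique_flip_apply_eq hβ hb (g := f - N u)
    fun v hv ↦ sub_eq_zero.2 (hu v hv).symm
  refine ⟨(u, p), ⟨by simp [hp], u.2⟩, ?_⟩
  rintro ⟨u', p'⟩ ⟨hmomentum, hker⟩
  obtain rfl : ⟨u', hker⟩ = u := hu_unique ⟨u', hker⟩ fun v hv ↦ by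
    have hbv : b v = 0 := hv
    simpa [hbv] using congr($hmomentum v)
  exact Prod.ext rfl (hp_unique p' (eq_sub_of_add_eq' hmomentum))

end MixedProblem

section Quasilinear

theorem lipschitzWith_of_coercive_of_apply_eq {X E : Type*} [PseudoMetricSpace X]
    [SeminormedAddCommGroup E] [NormedSpace ℝ E] {K ν : ℝ≥0} (hν : 0 < ν)
    {A : X → E →L[ℝ] E →L[ℝ] ℝ} (hA : LipschitzWith K A)
    (hcoer : ∀ w v, ν * ‖v‖ ^ 2 ≤ A w v v) {f : StrongDual ℝ E} {T : X → E}
    (hT : ∀ w, A w (T w) = f) : LipschitzWith (K * ‖f‖₊ / ν ^ 2) T := by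
  have hbound (w : X) : ν * ‖T w‖ ≤ ‖f‖ :=
    hT w ▸ mul_norm_le_norm_of_mul_norm_sq_le_apply (hcoer w (T w))
  refine LipschitzWith.of_dist_le_mul fun w₁ w₂ ↦ ?_
  have hdiff : A w₁ (T w₁ - T w₂) = (A w₂ - A w₁) (T w₂) := by
    simp [hT]
  have hstable : ν * ‖T w₁ - T w₂‖ ≤ K * dist w₁ w₂ * ‖T w₂‖ :=
    calc ν * ‖T w₁ - T w₂‖ ≤ ‖A w₁ (T w₁ - T w₂)‖ :=
          mul_norm_le_norm_of_mul_norm_sq_le_apply (hcoer w₁ _)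
      _ ≤ ‖A w₂ - A w₁‖ * ‖T w₂‖ := hdiff ▸ (A w₂ - A w₁).le_opNorm _
      _ ≤ K * dist w₁ w₂ * ‖T w₂‖ := by
          gcongr
          exact dist_comm w₁ w₂ ▸ dist_eq_norm (A w₂) (A w₁) ▸ hA.dist_le_mul w₂ w₁
  have hν2 : (0 : ℝ) < ν ^ 2 := by positivity
  push_cast
  rw [dist_eq_norm, div_mul_eq_mul_div, le_div_iff₀' hν2]
  calc (ν : ℝ) ^ 2 * ‖T w₁ - T w₂‖ = ν * (ν * ‖T w₁ - T w₂‖) := by ring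
    _ ≤ ν * (K * dist w₁ w₂ * ‖T w₂‖) := by gcongr
    _ = K * dist w₁ w₂ * (ν * ‖T w₂‖) := by ring
    _ ≤ K * dist w₁ w₂ * ‖f‖ := by gcongr; exact hbound w₂
    _ = K * ‖f‖ * dist w₁ w₂ := by ring

variable {H : Type*} [NormedAddCommGroup H] [InnerProductSpace ℝ H] [CompleteSpace H]

theorem existsUnique_apply_eq_of_isCoercive {B : H →L[ℝ] H →L[ℝ] ℝ} (hB : IsCoercive B)
    (f : StrongDual ℝ H) : ∃! u, B u = f := by
  let e := hB.continuousLinearEquivOfBilin.toEquiv.trans (InnerProductSpace.toDual ℝ H).toEquiv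
  have he : ⇑e = B := funext fun u ↦ ContinuousLinearMap.ext fun v ↦
    hB.continuousLinearEquivOfBilin_apply u v
  exact he ▸ e.bijective.existsUnique f

theorem existsUnique_apply_self_eq_of_coercive {K ν : ℝ≥0} (hν : 0 < ν)
    {A : H → H →L[ℝ] H →L[ℝ] ℝ} (hA : LipschitzWith K A)
    (hcoer : ∀ w v, ν * ‖v‖ ^ 2 ≤ A w v v) {f : StrongDual ℝ H}
    (hsmall : K * ‖f‖₊ / ν ^ 2 < 1) : ∃! u, A u u = f := by
  have hlinear (w : H) : ∃! u, A w u = f :=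
    existsUnique_apply_eq_of_isCoercive
      ⟨ν, hν, fun v ↦ by simpa only [sq, mul_assoc] using hcoer w v⟩ f
  obtain ⟨T, hT⟩ := forall_existsUnique_iff.1 hlinear
  have hcontr : ContractingWith (K * ‖f‖₊ / ν ^ 2) T :=
    ⟨hsmall, lipschitzWith_of_coercive_of_apply_eq hν hA hcoer fun _ ↦ hT.2 rfl⟩
  exact ⟨hcontr.fixedPoint, hT.2 hcontr.fixedPoint_isFixedPt,
    fun u hu ↦ hcontr.fixedPoint_unique (hT.1 hu)⟩

end Quasilinear

section NavierStokes

theorem lipschitzWith_add_bilinearComp_subtypeL {V : Type*} [NormedAddCommGroup V]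
    [NormedSpace ℝ V] (Z : Submodule ℝ V) (a : V →L[ℝ] V →L[ℝ] ℝ)
    {c : V →L[ℝ] V →L[ℝ] V →L[ℝ] ℝ} {C : ℝ}
    (hc : ∀ w ∈ Z, ∀ u ∈ Z, ∀ v ∈ Z, |c w u v| ≤ C * ‖w‖ * ‖u‖ * ‖v‖) :
    LipschitzWith C.toNNReal fun w : Z ↦ (a + c w).bilinearComp Z.subtypeL Z.subtypeL := by
  refine LipschitzWith.of_dist_le_mul fun w₁ w₂ ↦ ?_
  rw [dist_eq_norm, dist_eq_norm]
  refine ContinuousLinearMap.opNorm_le_bound₂ _ (by positivity) fun u v ↦ ?_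
  calc _ = |c ↑(w₁ - w₂) u v| := by simp
    _ ≤ C * ‖w₁ - w₂‖ * ‖u‖ * ‖v‖ := hc _ (w₁ - w₂).2 u u.2 v v.2
    _ ≤ C.toNNReal * ‖w₁ - w₂‖ * ‖u‖ * ‖v‖ := by gcongr; exact C.le_coe_toNNReal

theorem existsUnique_velocity {V : Type*} [NormedAddCommGroup V] [InnerProductSpace ℝ V]
    (Z : Submodule ℝ V) [CompleteSpace Z] {ν : ℝ} (hν : 0 < ν)
    {a : V →L[ℝ] V →L[ℝ] ℝ} (hcoer : ∀ v ∈ Z, ν * ‖v‖ ^ 2 ≤ a v v)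
    {c : V →L[ℝ] V →L[ℝ] V →L[ℝ] ℝ} {C : ℝ}
    (hc : ∀ w ∈ Z, ∀ u ∈ Z, ∀ v ∈ Z, |c w u v| ≤ C * ‖w‖ * ‖u‖ * ‖v‖)
    (hskew : ∀ w ∈ Z, ∀ v ∈ Z, c w v v = 0)
    {f : StrongDual ℝ V} {F : ℝ} (hf : ∀ v ∈ Z, |f v| ≤ F * ‖v‖) (hsmall : C * F / ν ^ 2 < 1) :
    ∃! u : Z, ∀ v ∈ Z, a u v + c u u v = f v := by
  lift ν to ℝ≥0 using hν.le
  have hf_norm : ‖f ∘L Z.subtypeL‖₊ ≤ F.toNNReal :=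
    ContinuousLinearMap.opNorm_le_bound _ F.toNNReal.2 fun v ↦
      (hf v v.2).trans <| mul_le_mul_of_nonneg_right F.le_coe_toNNReal (norm_nonneg _)
  have hsmall' : C.toNNReal * ‖f ∘L Z.subtypeL‖₊ / ν ^ 2 < 1 := by
    refine lt_of_le_of_lt (b := C.toNNReal * F.toNNReal / ν ^ 2) (by gcongr) ?_
    rcases le_total C 0 with hC | hC
    · simp [Real.toNNReal_of_nonpos hC]
    · rw [← Real.toNNReal_mul hC]
      simpa [Real.toNNReal_div' (sq_nonneg (ν : ℝ)), Real.toNNReal_pow] using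
        Real.toNNReal_lt_one.2 hsmall
  have hreduced := existsUnique_apply_self_eq_of_coercive (NNReal.coe_pos.1 hν)
    (lipschitzWith_add_bilinearComp_subtypeL Z a hc)
    (fun w v ↦ by simpa [hskew w w.2 v v.2] using hcoer v v.2) hsmall'
  simpa [ContinuousLinearMap.ext_iff] using hreduced

theorem abstract_navier_stokes_existence_uniqueness_general
    {V Q : Type*}
    [NormedAddCommGroup V] [InnerProductSpace ℝ V] [CompleteSpace V]
    [NormedAddCommGroup Q] [NormedSpace ℝ Q] [CompleteSpace Q]
    {ν : ℝ} (hν : 0 < ν)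
    {a : V →L[ℝ] V →L[ℝ] ℝ}
    {b : V →L[ℝ] Q →L[ℝ] ℝ}
    (hcoer : ∀ v ∈ b.ker, ν * ‖v‖ ^ 2 ≤ a v v)
    {c : V →L[ℝ] V →L[ℝ] V →L[ℝ] ℝ} {C : ℝ}
    (hc : ∀ w ∈ b.ker, ∀ u ∈ b.ker, ∀ v ∈ b.ker, |c w u v| ≤ C * ‖w‖ * ‖u‖ * ‖v‖)
    (hskew : ∀ w ∈ b.ker, ∀ v ∈ b.ker, c w v v = 0)
    {f : StrongDual ℝ V} {F : ℝ} (hf : ∀ v ∈ b.ker, |f v| ≤ F * ‖v‖)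
    {β : ℝ} (hβ : 0 < β)
    (hinfsup : ∀ q : Q, β * ‖q‖ ≤ ⨆ v : {v : V // v ≠ 0}, b (v : V) q / ‖(v : V)‖)
    (hsmall : C * F / ν ^ 2 < 1) :
    ∃! up : V × Q,
      (∀ v : V, a up.1 v + c up.1 up.1 v + b v up.2 = f v) ∧ (∀ q : Q, b up.1 q = 0) := by
  have hb (q : Q) : β * ‖q‖ ≤ ‖b.flip q‖ :=
    (hinfsup q).trans (iSup_apply_div_norm_le_norm (b.flip q))
  have : CompleteSpace b.ker := b.isClosed_ker.completeSpace_coe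
  have hvelocity := existsUnique_velocity b.ker hν hcoer hc hskew hf hsmall
  have hmixed := existsUnique_mixed_of_existsUnique_ker hβ hb (N := fun u ↦ a u + c u u) hvelocity
  simpa [ContinuousLinearMap.ext_iff] using hmixed

end NavierStokes

/-- If `γ = Ĉ‖f‖_*/ν² < 1`, then the abstract Navier–Stokes
variational problem admits exactly one solution `(u, p) ∈ V × Q`. -/
theorem abstract_navier_stokes_existence_uniqueness
    {V Q : Type*}
    [NormedAddCommGroup V] [InnerProductSpace ℝ V] [CompleteSpace V]
    [NormedAddCommGroup Q] [InnerProductSpace ℝ Q] [CompleteSpace Q]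
    (ν : ℝ) (hν : 0 < ν)
    (a : V →L[ℝ] V →L[ℝ] ℝ)
    (hcoer : ∀ v : V, ν * ‖v‖ ^ 2 ≤ a v v)
    (b : V →L[ℝ] Q →L[ℝ] ℝ)
    (c : V →L[ℝ] V →L[ℝ] V →L[ℝ] ℝ)
    (Chat : ℝ)
    (hc : ∀ w u v : V, |c w u v| ≤ Chat * ‖w‖ * ‖u‖ * ‖v‖)
    (hskew : ∀ w : V, (∀ q : Q, b w q = 0) → ∀ v : V, c w v v = 0)
    (f : V →L[ℝ] ℝ)
    (β : ℝ) (hβ : 0 < β)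
    (hinfsup : ∀ q : Q, β * ‖q‖ ≤ ⨆ v : {v : V // v ≠ 0}, b (v : V) q / ‖(v : V)‖)
    (hγ : Chat * ‖f‖ / ν ^ 2 < 1) :
    ∃! up : V × Q,
      (∀ v : V, a up.1 v + c up.1 up.1 v + b v up.2 = f v) ∧
      (∀ q : Q, b up.1 q = 0) :=
  abstract_navier_stokes_existence_uniqueness_general hν (fun v _ ↦ hcoer v)
    (fun w _ u _ v _ ↦ hc w u v) (fun w hw v _ ↦ hskew w (fun q ↦ congr($hw q)) v)
    (fun v _ ↦ f.le_opNorm v) hβ hinfsup hγ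
end

section
/- For every w ∈ Z there exists a unique T(w) ∈ Z such that a(T(w),v) + c(w;T(w),v) = f(v) for all v ∈ Z. Moreover ν‖T(w)‖_V ≤ ‖f‖_* for every w ∈ Z, and ‖T(w₁) − T(w₂)‖_V ≤ γ‖w₁ − w₂‖_V for all w₁, w₂ ∈ Z; in particular, if γ < 1 then T is a contraction of Z into the closed ball of radius ‖f‖_*/ν. -/
/-!
Skew-symmetry removes the convective term on the diagonal, so `a + c(w; ·, ·)` inherits the
coercivity of `a` on `Z` and the Lax–Milgram theorem yields `T w`. Testing the equation for `T w`
with `T w` bounds its norm by `‖f‖ / ν`. Subtracting the equations for `w₁` and `w₂` shows that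
`d = T w₁ - T w₂` solves a problem of the same kind with right-hand side `-c(w₁ - w₂; T w₂, ·)`;
the same test applied to `d`, together with the bound on `T w₂`, gives the Lipschitz estimate.
-/

theorem mul_le_of_mul_sq_le_mul {ν x M : ℝ} (hx : 0 ≤ x) (hM : 0 ≤ M)
    (h : ν * x ^ 2 ≤ M * x) : ν * x ≤ M := by
  rcases hx.eq_or_lt with rfl | hpos
  · simpa using hM
  · exact le_of_mul_le_mul_right (by simpa only [sq, mul_assoc] using h) hpos

section LaxMilgram

variable {V : Type*} [NormedAddCommGroup V] [InnerProductSpace ℝ V]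

theorem bijective_of_isCoercive [CompleteSpace V] {B : V →L[ℝ] V →L[ℝ] ℝ} (hB : IsCoercive B) :
    Function.Bijective B := by
  have hfactor : ⇑B = InnerProductSpace.toDual ℝ V ∘ hB.continuousLinearEquivOfBilin := by
    ext u v
    simp only [Function.comp_apply, InnerProductSpace.toDual_apply_apply,
      IsCoercive.continuousLinearEquivOfBilin_apply]
  rw [hfactor]
  exact (InnerProductSpace.toDual ℝ V).bijective.comp hB.continuousLinearEquivOfBilin.bijective

theorem exists_mem_forall_mem_apply_eq_of_coercive {Z : Submodule ℝ V} [CompleteSpace Z]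
    {B : V →L[ℝ] V →L[ℝ] ℝ} {ν : ℝ} (hν : 0 < ν) (hB : ∀ v ∈ Z, ν * ‖v‖ ^ 2 ≤ B v v)
    (g : V →L[ℝ] ℝ) : ∃ u ∈ Z, ∀ v ∈ Z, B u v = g v := by
  have hcoercive : IsCoercive (B.bilinearComp Z.subtypeL Z.subtypeL) :=
    ⟨ν, hν, fun v => by simpa [sq, mul_assoc] using hB v v.2⟩
  obtain ⟨u, hu⟩ := (bijective_of_isCoercive hcoercive).surjective (g.comp Z.subtypeL)
  exact ⟨u, u.2, fun v hv => DFunLike.congr_fun hu ⟨v, hv⟩⟩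

end LaxMilgram

section Estimates

variable {V : Type*} [SeminormedAddCommGroup V] [NormedSpace ℝ V] {Z : Submodule ℝ V}
  {a : V →L[ℝ] V →L[ℝ] ℝ} {c : V →L[ℝ] V →L[ℝ] V →L[ℝ] ℝ} {f : V →L[ℝ] ℝ}
  {ν C : ℝ} {w w₁ w₂ u u₁ u₂ : V}

/-- `u` is a weak solution in `Z` of the Oseen problem, the Navier–Stokes problem linearised by
freezing the advecting velocity `w`. Testing only with elements of `Z` eliminates the pressure. -/
def IsOseenSolution (Z : Submodule ℝ V) (a : V →L[ℝ] V →L[ℝ] ℝ)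
    (c : V →L[ℝ] V →L[ℝ] V →L[ℝ] ℝ) (f : V →L[ℝ] ℝ) (w u : V) : Prop :=
  u ∈ Z ∧ ∀ v ∈ Z, a u v + c w u v = f v

-- `C` itself may be negative if every vector of `Z` has norm zero.
theorem mul_norm_nonneg_of_trilinear_bound
    (hc : ∀ w ∈ Z, ∀ u ∈ Z, ∀ v ∈ Z, |c w u v| ≤ C * ‖w‖ * ‖u‖ * ‖v‖) (hw : w ∈ Z) :
    0 ≤ C * ‖w‖ := by
  rcases (norm_nonneg w).eq_or_lt with hzero | hpos
  · simp only [← hzero, mul_zero, le_refl]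
  · have hcube : 0 ≤ C * ‖w‖ * ‖w‖ * ‖w‖ := (abs_nonneg _).trans (hc w hw w hw w hw)
    exact nonneg_of_mul_nonneg_left (nonneg_of_mul_nonneg_left hcube hpos) hpos

namespace IsOseenSolution

theorem mul_norm_le (hcoer : ∀ v ∈ Z, ν * ‖v‖ ^ 2 ≤ a v v) (hskew : ∀ v ∈ Z, c w v v = 0)
    {M : ℝ} (hM : 0 ≤ M) (hf : ∀ v ∈ Z, |f v| ≤ M * ‖v‖) (hu : IsOseenSolution Z a c f w u) :
    ν * ‖u‖ ≤ M := by
  refine mul_le_of_mul_sq_le_mul (norm_nonneg u) hM ?_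
  calc
    ν * ‖u‖ ^ 2 ≤ a u u := hcoer u hu.1
    _ = a u u + c w u u := by rw [hskew u hu.1, add_zero]
    _ = f u := hu.2 u hu.1
    _ ≤ M * ‖u‖ := (le_abs_self _).trans (hf u hu.1)

theorem mul_norm_le_opNorm (hcoer : ∀ v ∈ Z, ν * ‖v‖ ^ 2 ≤ a v v)
    (hskew : ∀ v ∈ Z, c w v v = 0) (hu : IsOseenSolution Z a c f w u) : ν * ‖u‖ ≤ ‖f‖ :=
  hu.mul_norm_le hcoer hskew (norm_nonneg f) fun v _ => f.le_opNorm v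

theorem sub (hu₁ : IsOseenSolution Z a c f w₁ u₁) (hu₂ : IsOseenSolution Z a c f w₂ u₂) :
    IsOseenSolution Z a c (-c (w₁ - w₂) u₂) w₁ (u₁ - u₂) := by
  refine ⟨Z.sub_mem hu₁.1 hu₂.1, fun v hv => ?_⟩
  simp only [map_sub, sub_apply, neg_apply]
  linarith [hu₁.2 v hv, hu₂.2 v hv]

theorem mul_norm_sub_le (hcoer : ∀ v ∈ Z, ν * ‖v‖ ^ 2 ≤ a v v)
    (hc : ∀ w ∈ Z, ∀ u ∈ Z, ∀ v ∈ Z, |c w u v| ≤ C * ‖w‖ * ‖u‖ * ‖v‖)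
    (hskew : ∀ v ∈ Z, c w₁ v v = 0) (hw₁ : w₁ ∈ Z) (hw₂ : w₂ ∈ Z)
    (hu₁ : IsOseenSolution Z a c f w₁ u₁) (hu₂ : IsOseenSolution Z a c f w₂ u₂) :
    ν * ‖u₁ - u₂‖ ≤ C * ‖w₁ - w₂‖ * ‖u₂‖ := by
  have hw : w₁ - w₂ ∈ Z := Z.sub_mem hw₁ hw₂
  refine (hu₁.sub hu₂).mul_norm_le hcoer hskew
    (mul_nonneg (mul_norm_nonneg_of_trilinear_bound hc hw) (norm_nonneg u₂)) fun v hv => ?_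
  rw [neg_apply, abs_neg]
  exact hc _ hw _ hu₂.1 v hv

theorem norm_sub_le (hν : 0 < ν) (hcoer : ∀ v ∈ Z, ν * ‖v‖ ^ 2 ≤ a v v)
    (hc : ∀ w ∈ Z, ∀ u ∈ Z, ∀ v ∈ Z, |c w u v| ≤ C * ‖w‖ * ‖u‖ * ‖v‖)
    (hskew : ∀ w ∈ Z, ∀ v ∈ Z, c w v v = 0) (hw₁ : w₁ ∈ Z) (hw₂ : w₂ ∈ Z)
    (hu₁ : IsOseenSolution Z a c f w₁ u₁) (hu₂ : IsOseenSolution Z a c f w₂ u₂) :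
    ‖u₁ - u₂‖ ≤ C * ‖f‖ / ν ^ 2 * ‖w₁ - w₂‖ := by
  have hnonneg : 0 ≤ C * ‖w₁ - w₂‖ :=
    mul_norm_nonneg_of_trilinear_bound hc (Z.sub_mem hw₁ hw₂)
  rw [div_mul_eq_mul_div, le_div_iff₀' (by positivity)]
  calc
    ν ^ 2 * ‖u₁ - u₂‖ = ν * (ν * ‖u₁ - u₂‖) := by ring
    _ ≤ ν * (C * ‖w₁ - w₂‖ * ‖u₂‖) :=
      mul_le_mul_of_nonneg_left
        (hu₁.mul_norm_sub_le hcoer hc (hskew w₁ hw₁) hw₁ hw₂ hu₂) hν.le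
    _ = C * ‖w₁ - w₂‖ * (ν * ‖u₂‖) := by ring
    _ ≤ C * ‖w₁ - w₂‖ * ‖f‖ :=
      mul_le_mul_of_nonneg_left (hu₂.mul_norm_le_opNorm hcoer (hskew w₂ hw₂)) hnonneg
    _ = C * ‖f‖ * ‖w₁ - w₂‖ := by ring

end IsOseenSolution

end Estimates

theorem IsOseenSolution.eq {V : Type*} [NormedAddCommGroup V] [NormedSpace ℝ V]
    {Z : Submodule ℝ V} {a : V →L[ℝ] V →L[ℝ] ℝ} {c : V →L[ℝ] V →L[ℝ] V →L[ℝ] ℝ}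
    {f : V →L[ℝ] ℝ} {ν : ℝ} {w u₁ u₂ : V} (hν : 0 < ν)
    (hcoer : ∀ v ∈ Z, ν * ‖v‖ ^ 2 ≤ a v v) (hskew : ∀ v ∈ Z, c w v v = 0)
    (hu₁ : IsOseenSolution Z a c f w u₁) (hu₂ : IsOseenSolution Z a c f w u₂) : u₁ = u₂ := by
  have hnorm : ν * ‖u₁ - u₂‖ ≤ 0 :=
    (hu₁.sub hu₂).mul_norm_le hcoer hskew le_rfl fun v _ => by simp
  exact sub_eq_zero.mp (norm_le_zero_iff.mp (nonpos_of_mul_nonpos_right hnorm hν))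

theorem exists_isOseenSolution {V : Type*} [NormedAddCommGroup V] [InnerProductSpace ℝ V]
    {Z : Submodule ℝ V} [CompleteSpace Z] {a : V →L[ℝ] V →L[ℝ] ℝ}
    {c : V →L[ℝ] V →L[ℝ] V →L[ℝ] ℝ} {ν : ℝ} {w : V} (hν : 0 < ν)
    (hcoer : ∀ v ∈ Z, ν * ‖v‖ ^ 2 ≤ a v v) (hskew : ∀ v ∈ Z, c w v v = 0) (f : V →L[ℝ] ℝ) :
    ∃ u, IsOseenSolution Z a c f w u := by
  have hcoercive : ∀ v ∈ Z, ν * ‖v‖ ^ 2 ≤ (a + c w) v v := fun v hv => by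
    simpa [hskew v hv] using hcoer v hv
  exact exists_mem_forall_mem_apply_eq_of_coercive hν hcoercive f

theorem abstract_navier_stokes_fixed_point_map_general
    {V : Type*} [NormedAddCommGroup V] [InnerProductSpace ℝ V]
    (Z : Submodule ℝ V) [CompleteSpace Z]
    (ν : ℝ) (hν : 0 < ν)
    (a : V →L[ℝ] V →L[ℝ] ℝ)
    (hcoer : ∀ v ∈ Z, ν * ‖v‖ ^ 2 ≤ a v v)
    (c : V →L[ℝ] V →L[ℝ] V →L[ℝ] ℝ)
    (Chat : ℝ)
    (hc : ∀ w ∈ Z, ∀ u ∈ Z, ∀ v ∈ Z, |c w u v| ≤ Chat * ‖w‖ * ‖u‖ * ‖v‖)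
    (hskew : ∀ w ∈ Z, ∀ v ∈ Z, c w v v = 0)
    (f : V →L[ℝ] ℝ) :
    ∃ T : V → V,
      (∀ w ∈ Z,
        T w ∈ Z ∧
        (∀ v ∈ Z, a (T w) v + c w (T w) v = f v) ∧
        (∀ z ∈ Z, (∀ v ∈ Z, a z v + c w z v = f v) → z = T w) ∧
        ν * ‖T w‖ ≤ ‖f‖) ∧
      (∀ w₁ ∈ Z, ∀ w₂ ∈ Z, ‖T w₁ - T w₂‖ ≤ Chat * ‖f‖ / ν ^ 2 * ‖w₁ - w₂‖) ∧
      (∀ w ∈ Z, T w ∈ Metric.closedBall (0 : V) (‖f‖ / ν)) := by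
  have hexists : ∀ w ∈ Z, ∃ u, IsOseenSolution Z a c f w u := fun w hw =>
    exists_isOseenSolution hν hcoer (hskew w hw) f
  choose! T hT using hexists
  have hbound : ∀ w ∈ Z, ν * ‖T w‖ ≤ ‖f‖ := fun w hw =>
    (hT w hw).mul_norm_le_opNorm hcoer (hskew w hw)
  refine ⟨T, fun w hw => ⟨(hT w hw).1, (hT w hw).2, fun z hz hsol => ?_, hbound w hw⟩,
    fun w₁ hw₁ w₂ hw₂ => ?_, fun w hw => ?_⟩
  · exact IsOseenSolution.eq hν hcoer (hskew w hw) ⟨hz, hsol⟩ (hT w hw)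
  · exact IsOseenSolution.norm_sub_le hν hcoer hc hskew hw₁ hw₂ (hT w₁ hw₁) (hT w₂ hw₂)
  · exact mem_closedBall_zero_iff.mpr ((le_div_iff₀' hν).mpr (hbound w hw))

/-- For every `w ∈ Z` there exists a unique `T w ∈ Z` such that
`a(T w, v) + c(w; T w, v) = f(v)` for all `v ∈ Z`.  Moreover `ν‖T w‖ ≤ ‖f‖_*`
for every `w ∈ Z`, and `‖T w₁ − T w₂‖ ≤ γ‖w₁ − w₂‖` for all `w₁, w₂ ∈ Z`;
in particular, if `γ < 1` then `T` is a contraction of `Z` into the closed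
ball of radius `‖f‖_*/ν`. -/
theorem abstract_navier_stokes_fixed_point_map
    {V Q : Type*}
    [NormedAddCommGroup V] [InnerProductSpace ℝ V] [CompleteSpace V]
    [NormedAddCommGroup Q] [InnerProductSpace ℝ Q] [CompleteSpace Q]
    (ν : ℝ) (hν : 0 < ν)
    (a : V →L[ℝ] V →L[ℝ] ℝ)
    (hcoer : ∀ v : V, ν * ‖v‖ ^ 2 ≤ a v v)
    (b : V →L[ℝ] Q →L[ℝ] ℝ)
    (c : V →L[ℝ] V →L[ℝ] V →L[ℝ] ℝ)
    (Chat : ℝ)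
    (hc : ∀ w u v : V, |c w u v| ≤ Chat * ‖w‖ * ‖u‖ * ‖v‖)
    (Z : Set V) (hZ : Z = {v : V | ∀ q : Q, b v q = 0})
    (hskew : ∀ w ∈ Z, ∀ v : V, c w v v = 0)
    (f : V →L[ℝ] ℝ)
    (γ : ℝ) (hγdef : γ = Chat * ‖f‖ / ν ^ 2) :
    ∃ T : V → V,
      (∀ w ∈ Z,
        T w ∈ Z ∧
        (∀ v ∈ Z, a (T w) v + c w (T w) v = f v) ∧
        (∀ z ∈ Z, (∀ v ∈ Z, a z v + c w z v = f v) → z = T w) ∧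
        ν * ‖T w‖ ≤ ‖f‖) ∧
      (∀ w₁ ∈ Z, ∀ w₂ ∈ Z, ‖T w₁ - T w₂‖ ≤ γ * ‖w₁ - w₂‖) ∧
      (γ < 1 → ∀ w ∈ Z, T w ∈ Metric.closedBall (0 : V) (‖f‖ / ν)) := by
  obtain rfl : Z = (b.ker : Set V) := hZ.trans (by ext v; simp [ContinuousLinearMap.ext_iff])
  have : CompleteSpace b.ker := b.isClosed_ker.completeSpace_coe
  obtain ⟨T, hsol, hlip, hball⟩ := abstract_navier_stokes_fixed_point_map_general b.ker ν hν a
    (fun v _ => hcoer v) c Chat (fun w _ u _ v _ => hc w u v) (fun w hw v _ => hskew w hw v) f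
  exact ⟨T, hsol, hγdef ▸ hlip, fun _ => hball⟩
end

section
/- If γ_h ≤ r for some r < 1, then there exists exactly one pair (u_h,p_h) ∈ V_h × Q_h such that a_h(u_h,v_h) + c̃_h(u_h;u_h,v_h) + b(v_h,p_h) = f_h(v_h) for all v_h ∈ V_h and b(u_h,q_h) = 0 for all q_h ∈ Q_h; moreover this solution satisfies α_*ν‖u_h‖_V ≤ ‖f_h‖_{*,h}. -/
/-!
Freezing the advecting field `w` turns the momentum equation into a linear one for the form
`B w = a + c w`, and skew-symmetry of `c w` makes `B w` as coercive as `a`. On the discretely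
divergence-free subspace `ker b` the pressure disappears, so the linearised problem has a unique
solution `S w`, bounded by `‖f‖ / α`; the nonlinear solutions are exactly the fixed points of `S`.
As `B w` depends on `w` with Lipschitz constant `C`, the map `S` is Lipschitz with constant
`C ‖f‖ / α²`, hence a contraction for small data. The residual of the fixed point annihilates
`ker b`, so by duality it comes from a pressure, which is unique because `b.flip` is injective.
-/

section Coercive

variable {X : Type*} [NormedAddCommGroup X] [NormedSpace ℝ X] {α C : ℝ}

theorem mul_norm_le_of_coercive {A : X →ₗ[ℝ] X →ₗ[ℝ] ℝ} (hA : ∀ v, α * ‖v‖ ^ 2 ≤ A v v)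
    {u : X} {F : ℝ} (hF : 0 ≤ F) (hu : A u u ≤ F * ‖u‖) : α * ‖u‖ ≤ F := by
  rcases eq_or_ne u 0 with rfl | hu₀
  · simpa using hF
  · refine le_of_mul_le_mul_right ?_ (norm_pos_iff.2 hu₀)
    calc α * ‖u‖ * ‖u‖ = α * ‖u‖ ^ 2 := by ring
      _ ≤ A u u := hA u
      _ ≤ F * ‖u‖ := hu

theorem mul_norm_le_opNorm_of_coercive {A : X →ₗ[ℝ] X →ₗ[ℝ] ℝ} (hA : ∀ v, α * ‖v‖ ^ 2 ≤ A v v)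
    {f : StrongDual ℝ X} {u : X} (hu : A u u = f u) : α * ‖u‖ ≤ ‖f‖ :=
  mul_norm_le_of_coercive hA (norm_nonneg f) <|
    hu.trans_le <| (le_abs_self _).trans (f.le_opNorm u)

theorem bijective_of_coercive [FiniteDimensional ℝ X] (hα : 0 < α) {A : X →ₗ[ℝ] X →ₗ[ℝ] ℝ}
    (hA : ∀ v, α * ‖v‖ ^ 2 ≤ A v v) : Function.Bijective A := by
  have hinj : Function.Injective A := by
    refine (injective_iff_map_eq_zero A).2 fun u hu ↦ ?_
    have hnorm : α * ‖u‖ ≤ 0 := mul_norm_le_of_coercive hA le_rfl (by simp [hu])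
    exact norm_le_zero_iff.1 (nonpos_of_mul_nonpos_right hnorm hα)
  exact ⟨hinj, (LinearMap.injective_iff_surjective_of_finrank_eq_finrank
    Subspace.dual_finrank_eq.symm).1 hinj⟩

variable {B : X → X →ₗ[ℝ] X →ₗ[ℝ] ℝ}

theorem sq_mul_norm_sub_le_of_coercive_of_lipschitz (hα : 0 ≤ α) (hC : 0 ≤ C)
    (hcoer : ∀ w v, α * ‖v‖ ^ 2 ≤ B w v v)
    (hlip : ∀ w₁ w₂ u v, |B w₁ u v - B w₂ u v| ≤ C * ‖w₁ - w₂‖ * ‖u‖ * ‖v‖)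
    {f : StrongDual ℝ X} {w₁ w₂ u₁ u₂ : X} (h₁ : B w₁ u₁ = f) (h₂ : B w₂ u₂ = f) :
    α ^ 2 * ‖u₁ - u₂‖ ≤ C * ‖f‖ * ‖w₁ - w₂‖ := by
  have hu₂ : α * ‖u₂‖ ≤ ‖f‖ :=
    mul_norm_le_opNorm_of_coercive (hcoer w₂) (LinearMap.congr_fun h₂ u₂)
  have hsub : α * ‖u₁ - u₂‖ ≤ C * ‖w₁ - w₂‖ * ‖u₂‖ := by
    refine mul_norm_le_of_coercive (hcoer w₁) (by positivity) ?_
    calc B w₁ (u₁ - u₂) (u₁ - u₂) = -(B w₁ u₂ (u₁ - u₂) - B w₂ u₂ (u₁ - u₂)) := by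
          rw [map_sub (B w₁), LinearMap.sub_apply, h₁, h₂, neg_sub]
      _ ≤ C * ‖w₁ - w₂‖ * ‖u₂‖ * ‖u₁ - u₂‖ := (neg_le_abs _).trans (hlip _ _ _ _)
  calc α ^ 2 * ‖u₁ - u₂‖ = α * (α * ‖u₁ - u₂‖) := by ring
    _ ≤ α * (C * ‖w₁ - w₂‖ * ‖u₂‖) := by gcongr
    _ = C * ‖w₁ - w₂‖ * (α * ‖u₂‖) := by ring
    _ ≤ C * ‖w₁ - w₂‖ * ‖f‖ := by gcongr
    _ = C * ‖f‖ * ‖w₁ - w₂‖ := by ring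

theorem existsUnique_of_coercive_of_lipschitz [FiniteDimensional ℝ X] (hα : 0 < α) (hC : 0 ≤ C)
    (hcoer : ∀ w v, α * ‖v‖ ^ 2 ≤ B w v v)
    (hlip : ∀ w₁ w₂ u v, |B w₁ u v - B w₂ u v| ≤ C * ‖w₁ - w₂‖ * ‖u‖ * ‖v‖)
    {f : StrongDual ℝ X} (hf : C * ‖f‖ / α ^ 2 < 1) : ∃! u, ∀ v, B u u v = f v := by
  have : CompleteSpace X := FiniteDimensional.complete ℝ X
  let e (w : X) : X ≃ₗ[ℝ] Module.Dual ℝ X :=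
    LinearEquiv.ofBijective (B w) (bijective_of_coercive hα (hcoer w))
  let S (w : X) : X := (e w).symm f
  have hS (w : X) : B w (S w) = f := (e w).apply_symm_apply f
  have hcontr : ContractingWith (C * ‖f‖ / α ^ 2).toNNReal S := by
    refine ⟨by simpa using hf, LipschitzWith.of_dist_le_mul fun w₁ w₂ ↦ ?_⟩
    rw [dist_eq_norm, dist_eq_norm, Real.coe_toNNReal _ (by positivity), div_mul_eq_mul_div,
      le_div_iff₀' (by positivity)]
    exact sq_mul_norm_sub_le_of_coercive_of_lipschitz hα.le hC hcoer hlip (hS w₁) (hS w₂)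
  have hfixed (u : X) : (∀ v, B u u v = f v) ↔ Function.IsFixedPt S u :=
    LinearMap.ext_iff.symm.trans ((e u).symm_apply_eq.trans eq_comm).symm
  simp only [hfixed]
  exact ⟨hcontr.fixedPoint, hcontr.fixedPoint_isFixedPt, fun _ ↦ hcontr.fixedPoint_unique⟩

end Coercive

section Mixed

theorem mem_range_flip_iff {K X M : Type*} [Field K] [AddCommGroup X] [Module K X]
    [AddCommGroup M] [Module K M] (b : X →ₗ[K] M →ₗ[K] K)
    [FiniteDimensional K (LinearMap.range b.flip)] (g : Module.Dual K X) :
    g ∈ LinearMap.range b.flip ↔ ∀ v ∈ LinearMap.ker b, g v = 0 := by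
  have hker : (LinearMap.range b.flip).dualCoannihilator = LinearMap.ker b := by
    ext v
    simp [LinearMap.ext_iff]
  rw [← Submodule.mem_dualAnnihilator, ← hker, Subspace.dualCoannihilator_dualAnnihilator_eq]

theorem existsUnique_mixed_of_existsUnique_ker_s3 {K X M : Type*} [Field K] [AddCommGroup X]
    [Module K X] [AddCommGroup M] [Module K M] {b : X →ₗ[K] M →ₗ[K] K}
    [FiniteDimensional K (LinearMap.range b.flip)] (hb : Function.Injective b.flip)
    {N : X → Module.Dual K X} {f : Module.Dual K X}
    (h : ∃! u : LinearMap.ker b, ∀ v : LinearMap.ker b, N u v = f v) :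
    ∃! x : X × M, (∀ v, N x.1 v + b v x.2 = f v) ∧ ∀ q, b x.1 q = 0 := by
  obtain ⟨u, hu, hu_unique⟩ := h
  obtain ⟨p, hp⟩ := (mem_range_flip_iff b (f - N u)).2 fun v hv ↦ by simp [hu ⟨v, hv⟩]
  refine ⟨(u, p), ⟨fun v ↦ ?_, LinearMap.congr_fun u.2⟩, ?_⟩
  · exact add_eq_of_eq_sub' (LinearMap.congr_fun hp v)
  · rintro ⟨u', p'⟩ ⟨hmom, hdiv⟩
    obtain rfl : u' = u := congrArg Subtype.val <|
      hu_unique ⟨u', LinearMap.ext hdiv⟩ fun v ↦ by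
        simpa [LinearMap.mem_ker.1 v.2] using hmom v
    refine Prod.ext rfl (hb ?_)
    rw [hp]
    ext v
    exact eq_sub_of_add_eq' (hmom v)

theorem injective_flip_of_infSup {X M : Type*} [NormedAddCommGroup X] [NormedSpace ℝ X]
    [NormedAddCommGroup M] [NormedSpace ℝ M] {b : X →ₗ[ℝ] M →ₗ[ℝ] ℝ} {β : ℝ} (hβ : 0 < β)
    (hinfsup : ∀ q, β * ‖q‖ ≤ ⨆ v : {v : X // v ≠ 0}, b v q / ‖(v : X)‖) :
    Function.Injective b.flip := by
  refine (injective_iff_map_eq_zero b.flip).2 fun q hq ↦ ?_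
  have hbq (v : X) : b v q = 0 := LinearMap.congr_fun hq v
  have hnorm : β * ‖q‖ ≤ 0 := by
    simpa only [hbq, zero_div, Real.iSup_const_zero] using hinfsup q
  exact norm_le_zero_iff.1 (nonpos_of_mul_nonpos_right hnorm hβ)

variable {X M : Type*} [NormedAddCommGroup X] [NormedSpace ℝ X] [FiniteDimensional ℝ X]
  [AddCommGroup M] [Module ℝ M] {b : X →ₗ[ℝ] M →ₗ[ℝ] ℝ} {α C : ℝ}

theorem existsUnique_mixed_of_coercive_of_lipschitz (hb : Function.Injective b.flip)
    (hα : 0 < α) (hC : 0 ≤ C) {B : X → X →ₗ[ℝ] X →ₗ[ℝ] ℝ}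
    (hcoer : ∀ w v, α * ‖v‖ ^ 2 ≤ B w v v)
    (hlip : ∀ w₁ w₂ u v, |B w₁ u v - B w₂ u v| ≤ C * ‖w₁ - w₂‖ * ‖u‖ * ‖v‖)
    {f : StrongDual ℝ X} (hf : C * ‖f‖ / α ^ 2 < 1) :
    ∃! x : X × M, (∀ v, B x.1 x.1 v + b v x.2 = f v) ∧ ∀ q, b x.1 q = 0 := by
  let Z := LinearMap.ker b
  let fZ : StrongDual ℝ Z := f.comp Z.subtypeL
  have hfZ : ‖fZ‖ ≤ ‖f‖ := (f.opNorm_comp_le _).trans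
    (mul_le_of_le_one_right (norm_nonneg f) Z.norm_subtypeL_le)
  have hsmall : C * ‖fZ‖ / α ^ 2 < 1 := lt_of_le_of_lt (by gcongr) hf
  exact existsUnique_mixed_of_existsUnique_ker_s3 (N := fun u ↦ B u u) (f := f) hb <|
    existsUnique_of_coercive_of_lipschitz (B := fun w : Z ↦ (B w).domRestrict₁₂ Z Z) hα hC
      (fun w v ↦ hcoer w v) (fun w₁ w₂ u v ↦ hlip w₁ w₂ u v) hsmall

theorem discrete_navier_stokes_wellposedness_general (hb : Function.Injective b.flip)
    (hα : 0 < α) {a : X →ₗ[ℝ] X →ₗ[ℝ] ℝ} (ha : ∀ v, α * ‖v‖ ^ 2 ≤ a v v)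
    {c : X →ₗ[ℝ] X →ₗ[ℝ] X →ₗ[ℝ] ℝ} (hc : ∀ w u v, |c w u v| ≤ C * ‖w‖ * ‖u‖ * ‖v‖)
    (hskew : ∀ w v, c w v v = 0) {f : StrongDual ℝ X} (hf : C * ‖f‖ / α ^ 2 < 1) :
    (∃! x : X × M, (∀ v, a x.1 v + c x.1 x.1 v + b v x.2 = f v) ∧ ∀ q, b x.1 q = 0) ∧
      ∀ x : X × M, ((∀ v, a x.1 v + c x.1 x.1 v + b v x.2 = f v) ∧ ∀ q, b x.1 q = 0) →
        α * ‖x.1‖ ≤ ‖f‖ := by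
  have hcoer (w v : X) : α * ‖v‖ ^ 2 ≤ (a + c w) v v := by simpa [hskew] using ha v
  -- `C` may be negative when `X` is trivial, hence `max C 0`.
  have hlip (w₁ w₂ u v : X) :
      |(a + c w₁) u v - (a + c w₂) u v| ≤ max C 0 * ‖w₁ - w₂‖ * ‖u‖ * ‖v‖ :=
    calc |(a + c w₁) u v - (a + c w₂) u v| = |c (w₁ - w₂) u v| := by simp
      _ ≤ C * ‖w₁ - w₂‖ * ‖u‖ * ‖v‖ := hc _ _ _
      _ ≤ max C 0 * ‖w₁ - w₂‖ * ‖u‖ * ‖v‖ := by gcongr; exact le_max_left C 0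
  have hsmall : max C 0 * ‖f‖ / α ^ 2 < 1 := by
    rcases max_choice C 0 with h | h <;> simp [h, hf]
  refine ⟨existsUnique_mixed_of_coercive_of_lipschitz hb hα (le_max_right C 0) hcoer hlip hsmall,
    fun ⟨u, p⟩ ⟨hmom, hdiv⟩ ↦ mul_norm_le_opNorm_of_coercive (hcoer u) ?_⟩
  simpa [hdiv] using hmom u

end Mixed

/-- If `γ_h ≤ r` for some `r < 1`, then there exists exactly one
pair `(u_h, p_h) ∈ V_h × Q_h` such that
`a_h(u_h,v_h) + c̃_h(u_h;u_h,v_h) + b(v_h,p_h) = f_h(v_h)` for all `v_h ∈ V_h`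
and `b(u_h,q_h) = 0` for all `q_h ∈ Q_h`; moreover this solution satisfies
`α_* ν ‖u_h‖_V ≤ ‖f_h‖_{*,h}`. -/
theorem discrete_navier_stokes_wellposedness
    {V Q : Type*}
    [NormedAddCommGroup V] [InnerProductSpace ℝ V] [CompleteSpace V]
    [NormedAddCommGroup Q] [InnerProductSpace ℝ Q] [CompleteSpace Q]
    (b : V →L[ℝ] Q →L[ℝ] ℝ)
    (Vh : Subspace ℝ V) (Qh : Subspace ℝ Q)
    [FiniteDimensional ℝ Vh] [FiniteDimensional ℝ Qh]
    (ν αstar : ℝ) (hν : 0 < ν) (hαstar : 0 < αstar)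
    (ah : Vh →ₗ[ℝ] Vh →ₗ[ℝ] ℝ)
    (hcoer : ∀ v : Vh, αstar * ν * ‖v‖ ^ 2 ≤ ah v v)
    (ch : Vh →ₗ[ℝ] Vh →ₗ[ℝ] Vh →ₗ[ℝ] ℝ)
    (Chath : ℝ)
    (hch : ∀ w u v : Vh, |ch w u v| ≤ Chath * ‖w‖ * ‖u‖ * ‖v‖)
    (hskew : ∀ w v : Vh, ch w v v = 0)
    (fh : Vh →L[ℝ] ℝ)
    (βh : ℝ) (hβh : 0 < βh)
    (hinfsup : ∀ qh : Qh,
      βh * ‖qh‖ ≤ ⨆ vh : {v : Vh // v ≠ 0}, b ((vh : Vh) : V) (qh : Q) / ‖(vh : Vh)‖)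
    (r : ℝ) (hr : r < 1)
    (hγh : Chath * ‖fh‖ / (αstar ^ 2 * ν ^ 2) ≤ r) :
    (∃! uhph : Vh × Qh,
        (∀ vh : Vh,
          ah uhph.1 vh + ch uhph.1 uhph.1 vh + b (vh : V) (uhph.2 : Q) = fh vh) ∧
        (∀ qh : Qh, b (uhph.1 : V) (qh : Q) = 0)) ∧
    (∀ uhph : Vh × Qh,
        ((∀ vh : Vh,
            ah uhph.1 vh + ch uhph.1 uhph.1 vh + b (vh : V) (uhph.2 : Q) = fh vh) ∧
         (∀ qh : Qh, b (uhph.1 : V) (qh : Q) = 0)) →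
        αstar * ν * ‖uhph.1‖ ≤ ‖fh‖) :=
  discrete_navier_stokes_wellposedness_general (b := b.toLinearMap₁₂.domRestrict₁₂ Vh Qh)
    (injective_flip_of_infSup hβh hinfsup) (mul_pos hαstar hν) hcoer hch hskew
    (mul_pow αstar ν 2 ▸ hγh.trans_lt hr)
end

section
/- There exist constants C₁ > 0 and C₂ > 0, depending only on ν, Ĉ, β, the continuity constant of b, γ and θ, such that C₁·(ν‖Φ‖_V² + ‖ψ‖_Q²) ≤ ν‖e_u‖_V² + ‖e_p‖_Q² ≤ C₂·(ν‖Φ‖_V² + ‖ψ‖_Q²). -/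
open scoped RealInnerProductSpace

/-!
The equation defining `(Φ, ψ)`, tested with `v = 0`, gives `ψ = 0`. Tested with `v = e_u`, it loses
the pressure, and of the two terms in `δ(u, u_h, v) = c(e_u; u, v) + c(u_h; e_u, v)` skew-symmetry
removes the second one; since `ν‖u‖ ≤ ‖f‖`, the first is at most `γν‖e_u‖²`, so it is absorbed and
`(1 - γ)‖e_u‖ ≤ ‖Φ‖`. The inf-sup condition then bounds `e_p` by `Φ` and `e_u`. The opposite bound
comes from testing with `v = Φ`.
-/

universe uV uQ

theorem mul_norm_le_of_mul_norm_sq_le {E : Type*} [SeminormedAddGroup E] {x : E} {a M : ℝ}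
    (hM : 0 ≤ M) (h : a * ‖x‖ ^ 2 ≤ M * ‖x‖) : a * ‖x‖ ≤ M := by
  rcases (norm_nonneg x).eq_or_lt with hx | hx
  · simpa [← hx] using hM
  · exact le_of_mul_le_mul_right (by linarith) hx

theorem mul_norm_le_opNorm_of_mul_inner_self_eq {V : Type*} [NormedAddCommGroup V]
    [InnerProductSpace ℝ V] {f : V →L[ℝ] ℝ} {u : V} {ν : ℝ} (hu : ν * ⟪u, u⟫ = f u) :
    ν * ‖u‖ ≤ ‖f‖ := by
  refine mul_norm_le_of_mul_norm_sq_le (norm_nonneg f) ?_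
  rw [← real_inner_self_eq_norm_sq, hu]
  exact (le_abs_self _).trans (f.le_opNorm u)

section Multilinear

set_option maxSynthPendingDepth 3

variable {𝕜 E G : Type*} [NontriviallyNormedField 𝕜]
  [SeminormedAddCommGroup E] [NormedSpace 𝕜 E] [SeminormedAddCommGroup G] [NormedSpace 𝕜 G]

theorem bilinear_diag_sub_diag (B : E →L[𝕜] E →L[𝕜] G) (u w : E) :
    B u u - B w w = B (u - w) u + B w (u - w) := by
  simp

theorem norm_bilinear_diag_sub_diag_le (B : E →L[𝕜] E →L[𝕜] G) (u w : E) :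
    ‖B u u - B w w‖ ≤ (‖B‖ * ‖u‖ + ‖B‖ * ‖w‖) * ‖u - w‖ :=
  calc ‖B u u - B w w‖ ≤ ‖B (u - w) u‖ + ‖B w (u - w)‖ := by
        rw [bilinear_diag_sub_diag]
        exact norm_add_le _ _
    _ ≤ ‖B‖ * ‖u - w‖ * ‖u‖ + ‖B‖ * ‖w‖ * ‖u - w‖ :=
        add_le_add (B.le_opNorm₂ _ _) (B.le_opNorm₂ _ _)
    _ = (‖B‖ * ‖u‖ + ‖B‖ * ‖w‖) * ‖u - w‖ := by ring

theorem norm_trilinear_diag_sub_diag_apply_sub_le (c : E →L[𝕜] E →L[𝕜] E →L[𝕜] G) {u w : E}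
    (hw : c w (u - w) (u - w) = 0) :
    ‖(c u u - c w w) (u - w)‖ ≤ ‖c‖ * ‖u‖ * ‖u - w‖ ^ 2 :=
  calc ‖(c u u - c w w) (u - w)‖ = ‖c (u - w) u (u - w)‖ := by
        rw [bilinear_diag_sub_diag, add_apply, hw, add_zero]
    _ ≤ ‖c (u - w) u‖ * ‖u - w‖ := (c (u - w) u).le_opNorm _
    _ ≤ ‖c‖ * ‖u - w‖ * ‖u‖ * ‖u - w‖ := by gcongr; exact c.le_opNorm₂ _ _
    _ = ‖c‖ * ‖u‖ * ‖u - w‖ ^ 2 := by ring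

end Multilinear

section TrilinearBound

set_option maxSynthPendingDepth 3

variable {𝕜 E G : Type*} [NontriviallyNormedField 𝕜]
  [NormedAddCommGroup E] [NormedSpace 𝕜 E] [SeminormedAddCommGroup G] [NormedSpace 𝕜 G]

theorem trilinear_opNorm_le [Nontrivial E] {c : E →L[𝕜] E →L[𝕜] E →L[𝕜] G} {K : ℝ}
    (hc : ∀ w x v, ‖c w x v‖ ≤ K * ‖w‖ * ‖x‖ * ‖v‖) : ‖c‖ ≤ K := by
  have hK : 0 ≤ K := by
    obtain ⟨v, hv⟩ := exists_ne (0 : E)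
    have hv' : 0 < ‖v‖ := norm_pos_iff.mpr hv
    have h : 0 ≤ K * ‖v‖ * ‖v‖ * ‖v‖ := (norm_nonneg _).trans (hc v v v)
    exact nonneg_of_mul_nonneg_left
      (nonneg_of_mul_nonneg_left (nonneg_of_mul_nonneg_left h hv') hv') hv'
  exact c.opNorm_le_bound hK fun w => (c w).opNorm_le_bound₂ (by positivity) (hc w)

-- For trivial `E` the constant `K` may be negative, so that `‖c‖ ≤ K` fails.
theorem trilinear_opNorm_mul_le {c : E →L[𝕜] E →L[𝕜] E →L[𝕜] G} {K t : ℝ}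
    (hc : ∀ w x v, ‖c w x v‖ ≤ K * ‖w‖ * ‖x‖ * ‖v‖) (ht : 0 ≤ t)
    (htE : Subsingleton E → t = 0) : ‖c‖ * t ≤ K * t := by
  rcases subsingleton_or_nontrivial E with hE | hE
  · simp [htE hE]
  · exact mul_le_mul_of_nonneg_right (trilinear_opNorm_le hc) ht

end TrilinearBound

section InfSup

variable {V Q : Type*} [NormedAddCommGroup V] [NormedSpace ℝ V]
  [NormedAddCommGroup Q] [NormedSpace ℝ Q]

/-- The inf-sup (Ladyzhenskaya–Babuška–Brezzi) condition with constant `β`. The supremum is never a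
junk value: the quotients are bounded by `‖b‖ * ‖q‖`, and for trivial `V` the empty supremum `0`
forces `q = 0` when `β > 0`. -/
def InfSupCondition (b : V →L[ℝ] Q →L[ℝ] ℝ) (β : ℝ) : Prop :=
  ∀ q : Q, β * ‖q‖ ≤ ⨆ v : {v : V // v ≠ 0}, b (v : V) q / ‖(v : V)‖

theorem InfSupCondition.mul_norm_le {b : V →L[ℝ] Q →L[ℝ] ℝ} {β M : ℝ} {q : Q}
    (hb : InfSupCondition b β) (hM : 0 ≤ M) (hq : ∀ v, b v q ≤ M * ‖v‖) : β * ‖q‖ ≤ M :=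
  (hb q).trans <| Real.iSup_le
    (fun v => (div_le_iff₀ (norm_pos_iff.mpr v.2)).mpr (hq v)) hM

end InfSup

section LinearizedProblem

variable {V Q : Type*} [NormedAddCommGroup V] [InnerProductSpace ℝ V]
  [NormedAddCommGroup Q] [NormedSpace ℝ Q]
  {b : V →L[ℝ] Q →L[ℝ] ℝ} {d : V →L[ℝ] ℝ} {e Φ : V} {r : Q} {ν β γ : ℝ}

theorem one_sub_mul_norm_le_of_residual (hν : 0 < ν) (hd : ‖d e‖ ≤ γ * ν * ‖e‖ ^ 2)
    (he : b e r = 0) (hΦ : ∀ v, ν * ⟪Φ, v⟫ = ν * ⟪e, v⟫ + b v r + d v) :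
    (1 - γ) * ‖e‖ ≤ ‖Φ‖ := by
  refine mul_norm_le_of_mul_norm_sq_le (norm_nonneg Φ) (le_of_mul_le_mul_left ?_ hν)
  have h_test : ν * ⟪Φ, e⟫ = ν * ‖e‖ ^ 2 + d e := by
    rw [hΦ e, he, real_inner_self_eq_norm_sq, add_zero]
  have h_cs : ν * ⟪Φ, e⟫ ≤ ν * (‖Φ‖ * ‖e‖) := by gcongr; exact real_inner_le_norm Φ e
  linarith [neg_le_of_abs_le hd]

theorem InfSupCondition.mul_norm_le_of_residual (hb : InfSupCondition b β) (hν : 0 ≤ ν)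
    (hΦ : ∀ v, ν * ⟪Φ, v⟫ = ν * ⟪e, v⟫ + b v r + d v) :
    β * ‖r‖ ≤ ν * ‖Φ‖ + ν * ‖e‖ + ‖d‖ := by
  refine hb.mul_norm_le (by positivity) fun v => ?_
  calc b v r = ν * ⟪Φ, v⟫ + ν * -⟪e, v⟫ + -d v := by rw [hΦ v]; ring
    _ ≤ ν * (‖Φ‖ * ‖v‖) + ν * (‖e‖ * ‖v‖) + ‖d‖ * ‖v‖ := by
        gcongr
        · exact real_inner_le_norm Φ v
        · exact (neg_le_abs _).trans (abs_real_inner_le_norm e v)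
        · exact (neg_le_abs _).trans (d.le_opNorm v)
    _ = (ν * ‖Φ‖ + ν * ‖e‖ + ‖d‖) * ‖v‖ := by ring

theorem mul_norm_le_of_residual (hν : 0 ≤ ν)
    (hΦ : ∀ v, ν * ⟪Φ, v⟫ = ν * ⟪e, v⟫ + b v r + d v) :
    ν * ‖Φ‖ ≤ ν * ‖e‖ + ‖b‖ * ‖r‖ + ‖d‖ := by
  refine mul_norm_le_of_mul_norm_sq_le (by positivity) ?_
  calc ν * ‖Φ‖ ^ 2 = ν * ⟪e, Φ⟫ + b Φ r + d Φ := by rw [← real_inner_self_eq_norm_sq, hΦ Φ]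
    _ ≤ ν * (‖e‖ * ‖Φ‖) + ‖b‖ * ‖Φ‖ * ‖r‖ + ‖d‖ * ‖Φ‖ := by
        gcongr
        · exact real_inner_le_norm e Φ
        · exact (le_abs_self _).trans (b.le_opNorm₂ Φ r)
        · exact (le_abs_self _).trans (d.le_opNorm Φ)
    _ = (ν * ‖e‖ + ‖b‖ * ‖r‖ + ‖d‖) * ‖Φ‖ := by ring

end LinearizedProblem

section EnergyBounds

variable {ν x y z : ℝ}

theorem energy_le_of_mul_le {α M : ℝ} (hν : 0 < ν) (hx : 0 ≤ x)
    (h : ν * x ≤ α * (ν * y) + M * z) :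
    ν * x ^ 2 ≤ (α ^ 2 + M ^ 2 / ν) * (ν * y ^ 2 + z ^ 2) := by
  have h_sq : (ν * x) ^ 2 ≤ (α * (ν * y) + M * z) ^ 2 := by gcongr
  -- Cauchy-Schwarz in the plane for `(α√ν, M)` and `(√ν y, z)`
  have h_cs : (α * (ν * y) + M * z) ^ 2 ≤ (α ^ 2 * ν + M ^ 2) * (ν * y ^ 2 + z ^ 2) := by
    nlinarith [mul_nonneg hν.le (sq_nonneg (α * z - M * y))]
  calc ν * x ^ 2 = (ν * x) ^ 2 / ν := by field_simp
    _ ≤ (α ^ 2 * ν + M ^ 2) * (ν * y ^ 2 + z ^ 2) / ν := by gcongr; exact h_sq.trans h_cs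
    _ = (α ^ 2 + M ^ 2 / ν) * (ν * y ^ 2 + z ^ 2) := by field_simp

theorem energy_le_of_le_of_le {α β g : ℝ} (hν : 0 ≤ ν) (hβ : 0 < β) (hg : 0 < g) (hα : 0 ≤ α)
    (hy : 0 ≤ y) (hz : 0 ≤ z) (hyx : g * y ≤ x) (hzx : β * z ≤ ν * x + α * (ν * y)) :
    ν * y ^ 2 + z ^ 2 ≤ (1 / g ^ 2 + ν * ((g + α) / (g * β)) ^ 2) * (ν * x ^ 2) := by
  have hy_le : y ≤ x / g := by rwa [le_div_iff₀' hg]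
  have hz_le : z ≤ ν * ((g + α) / (g * β)) * x :=
    calc z ≤ (ν * x + α * (ν * y)) / β := by rwa [le_div_iff₀' hβ]
      _ ≤ (ν * x + α * (ν * (x / g))) / β := by gcongr
      _ = ν * ((g + α) / (g * β)) * x := by field_simp
  calc ν * y ^ 2 + z ^ 2 ≤ ν * (x / g) ^ 2 + (ν * ((g + α) / (g * β)) * x) ^ 2 := by gcongr
    _ = (1 / g ^ 2 + ν * ((g + α) / (g * β)) ^ 2) * (ν * x ^ 2) := by ring

end EnergyBounds

section NormEquivalence

variable {V Q : Type*} [NormedAddCommGroup V] [InnerProductSpace ℝ V]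
  [NormedAddCommGroup Q] [InnerProductSpace ℝ Q]
  {b : V →L[ℝ] Q →L[ℝ] ℝ} {d : V →L[ℝ] ℝ} {e Φ : V} {r ψ : Q} {ν β γ θ M : ℝ}

theorem norm_equivalence_of_residual (hν : 0 < ν) (hβ : 0 < β) (hγ₀ : 0 ≤ γ) (hγ : γ < 1)
    (hθ : 0 ≤ θ) (hbM : ‖b‖ ≤ M) (hb : InfSupCondition b β) (he : ∀ q, b e q = 0)
    (hd : ‖d‖ ≤ (γ * ν + θ * ν) * ‖e‖) (hde : ‖d e‖ ≤ γ * ν * ‖e‖ ^ 2)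
    (hΦψ : ∀ v q, ν * ⟪Φ, v⟫ + ⟪ψ, q⟫ = ν * ⟪e, v⟫ + b v r + b e q + d v) :
    ν * ‖Φ‖ ^ 2 + ‖ψ‖ ^ 2 ≤ ((2 + θ) ^ 2 + M ^ 2 / ν) * (ν * ‖e‖ ^ 2 + ‖r‖ ^ 2) ∧
    ν * ‖e‖ ^ 2 + ‖r‖ ^ 2 ≤
      (1 / (1 - γ) ^ 2 + ν * ((2 + θ) / ((1 - γ) * β)) ^ 2) * (ν * ‖Φ‖ ^ 2 + ‖ψ‖ ^ 2) := by
  have hψ : ψ = 0 := by simpa [he] using hΦψ 0 ψ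
  have hΦ (v : V) : ν * ⟪Φ, v⟫ = ν * ⟪e, v⟫ + b v r + d v := by simpa using hΦψ v 0
  have h_velocity : (1 - γ) * ‖e‖ ≤ ‖Φ‖ := one_sub_mul_norm_le_of_residual hν hde (he r) hΦ
  have h_pressure : β * ‖r‖ ≤ ν * ‖Φ‖ + (1 + γ + θ) * (ν * ‖e‖) := by
    linarith [hb.mul_norm_le_of_residual hν.le hΦ]
  have h_residual : ν * ‖Φ‖ ≤ (2 + θ) * (ν * ‖e‖) + M * ‖r‖ :=
    calc ν * ‖Φ‖ ≤ ν * ‖e‖ + ‖b‖ * ‖r‖ + ‖d‖ := mul_norm_le_of_residual hν.le hΦ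
      _ ≤ ν * ‖e‖ + M * ‖r‖ + (1 * ν + θ * ν) * ‖e‖ := by
          gcongr
          exact hd.trans (by gcongr)
      _ = (2 + θ) * (ν * ‖e‖) + M * ‖r‖ := by ring
  rw [hψ, norm_zero, zero_pow two_ne_zero, add_zero]
  refine ⟨energy_le_of_mul_le hν (norm_nonneg Φ) h_residual, ?_⟩
  convert energy_le_of_le_of_le hν.le hβ (sub_pos.mpr hγ) (by positivity) (norm_nonneg e)
    (norm_nonneg r) h_velocity h_pressure using 5
  ring

end NormEquivalence

set_option maxSynthPendingDepth 3 in
theorem norm_equivalence_a_posteriori_general (ν Chat β Cb γ θ : ℝ)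
    (hν : 0 < ν) (hβ : 0 < β) (hγ : γ < 1) (hθ : 0 ≤ θ) :
    ∃ C₁ > (0 : ℝ), ∃ C₂ > (0 : ℝ),
      ∀ {V : Type uV} {Q : Type uQ}
        [NormedAddCommGroup V] [InnerProductSpace ℝ V]
        [NormedAddCommGroup Q] [InnerProductSpace ℝ Q]
        (b : V →L[ℝ] Q →L[ℝ] ℝ)
        (c : V →L[ℝ] V →L[ℝ] V →L[ℝ] ℝ)
        (f : V →L[ℝ] ℝ)
        (u uh Φ : V) (p ph ψ : Q),
        ‖b‖ ≤ Cb →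
        InfSupCondition b β →
        (∀ w x v : V, |c w x v| ≤ Chat * ‖w‖ * ‖x‖ * ‖v‖) →
        (∀ w : V, (∀ q : Q, b w q = 0) → ∀ v : V, c w v v = 0) →
        Chat * ‖f‖ / ν ^ 2 = γ →
        (∀ v : V, ν * ⟪u, v⟫ + c u u v + b v p = f v) →
        (∀ q : Q, b u q = 0) →
        (∀ q : Q, b uh q = 0) →
        Chat * ‖uh‖ ≤ θ * ν →
        (∀ v : V, ∀ q : Q,
          ν * ⟪Φ, v⟫ + ⟪ψ, q⟫ =
            ν * ⟪u - uh, v⟫ + b v (p - ph) + b (u - uh) q +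
              (c u u v - c uh uh v)) →
        C₁ * (ν * ‖Φ‖ ^ 2 + ‖ψ‖ ^ 2) ≤ ν * ‖u - uh‖ ^ 2 + ‖p - ph‖ ^ 2 ∧
        ν * ‖u - uh‖ ^ 2 + ‖p - ph‖ ^ 2 ≤ C₂ * (ν * ‖Φ‖ ^ 2 + ‖ψ‖ ^ 2) := by
  have : 0 < 1 - γ := sub_pos.mpr hγ
  refine ⟨((2 + θ) ^ 2 + Cb ^ 2 / ν)⁻¹, by positivity,
    1 / (1 - γ) ^ 2 + ν * ((2 + θ) / ((1 - γ) * β)) ^ 2, by positivity, ?_⟩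
  intro V Q _ _ _ _ b c f u uh Φ p ph ψ hb h_infsup hc h_skew hf hu hbu hbuh huh hΦψ
  have hcf : ‖c‖ * ‖f‖ ≤ γ * ν ^ 2 := by
    rw [← hf, div_mul_cancel₀ _ (by positivity)]
    exact trilinear_opNorm_mul_le hc (norm_nonneg f) fun _ => by simp [Subsingleton.elim f 0]
  have hcuh : ‖c‖ * ‖uh‖ ≤ θ * ν :=
    (trilinear_opNorm_mul_le hc (norm_nonneg uh) fun _ => by simp [Subsingleton.elim uh 0]).trans
      huh
  have hcu : ‖c‖ * ‖u‖ ≤ γ * ν := by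
    have h_energy : ν * ⟪u, u⟫ = f u := by
      rw [← hu u, h_skew u hbu u, hbu p, add_zero, add_zero]
    have h_stab : ν * ‖u‖ ≤ ‖f‖ := mul_norm_le_opNorm_of_mul_inner_self_eq h_energy
    refine le_of_mul_le_mul_right ?_ hν
    linarith [mul_le_mul_of_nonneg_left h_stab (norm_nonneg c)]
  have hγ₀ : 0 ≤ γ := nonneg_of_mul_nonneg_left ((by positivity : 0 ≤ ‖c‖ * ‖u‖).trans hcu) hν
  have hbe (q : Q) : b (u - uh) q = 0 := by simp [hbu q, hbuh q]
  have hd : ‖c u u - c uh uh‖ ≤ (γ * ν + θ * ν) * ‖u - uh‖ :=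
    (norm_bilinear_diag_sub_diag_le c u uh).trans (by gcongr)
  have hde : ‖(c u u - c uh uh) (u - uh)‖ ≤ γ * ν * ‖u - uh‖ ^ 2 :=
    (norm_trilinear_diag_sub_diag_apply_sub_le c (h_skew uh hbuh (u - uh))).trans (by gcongr)
  have h := norm_equivalence_of_residual hν hβ hγ₀ hγ hθ hb h_infsup hbe hd hde hΦψ
  exact ⟨(inv_mul_le_iff₀ (by positivity)).mpr h.1, h.2⟩

/-- There exist constants `C₁ > 0` and `C₂ > 0`, depending only on
`ν`, `Ĉ`, `β`, the continuity constant of `b`, `γ` and `θ`, such that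
`C₁·(ν‖Φ‖² + ‖ψ‖²) ≤ ν‖e_u‖² + ‖e_p‖² ≤ C₂·(ν‖Φ‖² + ‖ψ‖²)`. -/
theorem norm_equivalence_a_posteriori
    {V Q : Type*}
    [NormedAddCommGroup V] [InnerProductSpace ℝ V] [CompleteSpace V]
    [NormedAddCommGroup Q] [InnerProductSpace ℝ Q] [CompleteSpace Q]
    (ν Chat β Cb γ θ : ℝ)
    (hν : 0 < ν) (hβ : 0 < β) (hγ : γ < 1) (hθ0 : 0 ≤ θ) (hθ1 : θ < 1) :
    ∃ C₁ > (0 : ℝ), ∃ C₂ > (0 : ℝ),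
      ∀ (b : V →L[ℝ] Q →L[ℝ] ℝ)
        (c : V →L[ℝ] V →L[ℝ] V →L[ℝ] ℝ)
        (f : V →L[ℝ] ℝ)
        (u uh Φ : V) (p ph ψ : Q),
        ‖b‖ ≤ Cb →
        (∀ q : Q, β * ‖q‖ ≤ ⨆ v : {v : V // v ≠ 0}, b (v : V) q / ‖(v : V)‖) →
        (∀ w x v : V, |c w x v| ≤ Chat * ‖w‖ * ‖x‖ * ‖v‖) →
        (∀ w : V, (∀ q : Q, b w q = 0) → ∀ v : V, c w v v = 0) →
        Chat * ‖f‖ / ν ^ 2 = γ →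
        (∀ v : V, ν * ⟪u, v⟫ + c u u v + b v p = f v) →
        (∀ q : Q, b u q = 0) →
        (∀ q : Q, b uh q = 0) →
        Chat * ‖uh‖ ≤ θ * ν →
        (∀ v : V, ∀ q : Q,
          ν * ⟪Φ, v⟫ + ⟪ψ, q⟫ =
            ν * ⟪u - uh, v⟫ + b v (p - ph) + b (u - uh) q +
              (c u u v - c uh uh v)) →
        C₁ * (ν * ‖Φ‖ ^ 2 + ‖ψ‖ ^ 2) ≤ ν * ‖u - uh‖ ^ 2 + ‖p - ph‖ ^ 2 ∧
        ν * ‖u - uh‖ ^ 2 + ‖p - ph‖ ^ 2 ≤ C₂ * (ν * ‖Φ‖ ^ 2 + ‖ψ‖ ^ 2) := by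
  obtain ⟨C₁, hC₁, C₂, hC₂, h⟩ := norm_equivalence_a_posteriori_general ν Chat β Cb γ θ hν hβ hγ hθ0
  exact ⟨C₁, hC₁, C₂, hC₂, h⟩
end

section
/- One has ψ = 0, and consequently ν‖e_u‖_V² + ‖e_p‖_Q² ≤ C₂·R^{NS}[(e_u,e_p),(Φ,0)], where C₂ is the constant in the upper norm-equivalence bound (depending only on ν, Ĉ, β, the continuity constant of b, γ and θ). -/
open scoped RealInnerProductSpace

/-!
Testing the equation for `(Φ, ψ)` with `(0, ψ)` leaves `‖ψ‖² = b(e_u, ψ) = 0`, and testing it with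
`(Φ, 0)` gives `R(Φ, 0) = ν‖Φ‖²`, so both errors only have to be bounded by `‖Φ‖`.

With `δ(u, u_h, v) = c(e_u; u, v) + c(u_h; e_u, v)`, skew-symmetry leaves
`δ(u, u_h, e_u) = c(e_u; u_h, e_u)`. The smallness of `u_h` lets the viscous term absorb it, whence
`(1 - θ)‖e_u‖ ≤ ‖Φ‖`. The inf-sup condition then bounds `e_p` through
`b(v, e_p) = ν⟪Φ, v⟫ - ν⟪e_u, v⟫ - δ(u, u_h, v)`, where `δ` is controlled by `‖e_u‖` thanks to the
energy estimate `ν‖u‖ ≤ ‖f‖`.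
-/

lemma iSup_div_norm_le {V : Type*} [SeminormedAddCommGroup V] {l : V → ℝ} {K : ℝ}
    (hK : 0 ≤ K) (hl : ∀ v, l v ≤ K * ‖v‖) :
    ⨆ v : {v : V // v ≠ 0}, l v / ‖(v : V)‖ ≤ K :=
  Real.iSup_le (fun v ↦ div_le_of_le_mul₀ (norm_nonneg _) hK (hl v)) hK

section NormedSpace

variable {V : Type*} [SeminormedAddCommGroup V] [NormedSpace ℝ V]

lemma mul_norm_le_opNorm_of_mul_norm_sq_le {k : ℝ} {l : V →L[ℝ] ℝ} {x : V}
    (h : k * ‖x‖ ^ 2 ≤ l x) : k * ‖x‖ ≤ ‖l‖ := by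
  rcases (norm_nonneg x).eq_or_lt with hx | hx
  · simp [← hx]
  · refine le_of_mul_le_mul_right ?_ hx
    calc k * ‖x‖ * ‖x‖ = k * ‖x‖ ^ 2 := by ring
      _ ≤ l x := h
      _ ≤ ‖l‖ * ‖x‖ := (le_abs_self _).trans (l.le_opNorm x)

lemma mul_norm_le_abs_mul_of_mul_norm_sq_le {ν C γ : ℝ} (hν : 0 < ν) {f : V →L[ℝ] ℝ} {u : V}
    (hγ : C * ‖f‖ / ν ^ 2 = γ) (hu : ν * ‖u‖ ^ 2 ≤ f u) : C * ‖u‖ ≤ |γ| * ν :=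
  calc C * ‖u‖ ≤ |C| * ‖u‖ := mul_le_mul_of_nonneg_right (le_abs_self C) (norm_nonneg u)
    _ ≤ |C| * (‖f‖ / ν) :=
      mul_le_mul_of_nonneg_left
        ((le_div_iff₀' hν).mpr (mul_norm_le_opNorm_of_mul_norm_sq_le hu)) (abs_nonneg C)
    _ = |γ| * ν := by
      rw [← hγ, abs_div, abs_mul, abs_norm, abs_of_pos (pow_pos hν 2)]
      field_simp

/-- The difference `δ(u, w, v) = c(u; u, v) - c(w; w, v)` of the convection terms of two
velocities, for an arbitrary trilinear form `c`. -/
noncomputable def convectionDiff (c : V →L[ℝ] V →L[ℝ] V →L[ℝ] ℝ) (u w v : V) : ℝ :=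
  c u u v - c w w v

variable {c : V →L[ℝ] V →L[ℝ] V →L[ℝ] ℝ} {u w : V}

lemma convectionDiff_eq_add (v : V) :
    convectionDiff c u w v = c (u - w) u v + c w (u - w) v := by
  simp only [convectionDiff, map_sub, _root_.sub_apply]
  ring

lemma convectionDiff_sub_self (hw : c w (u - w) (u - w) = 0)
    (huw : c (u - w) (u - w) (u - w) = 0) :
    convectionDiff c u w (u - w) = c (u - w) w (u - w) := by
  have hsplit : c (u - w) u (u - w) = c (u - w) w (u - w) + c (u - w) (u - w) (u - w) := by
    rw [← _root_.add_apply, ← map_add, add_sub_cancel]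
  rw [convectionDiff_eq_add, hw, hsplit, huw, add_zero, add_zero]

lemma abs_convectionDiff_le {C : ℝ} (hc : ∀ x y z, |c x y z| ≤ C * ‖x‖ * ‖y‖ * ‖z‖) (v : V) :
    |convectionDiff c u w v| ≤ (C * ‖u‖ + C * ‖w‖) * ‖u - w‖ * ‖v‖ := by
  rw [convectionDiff_eq_add]
  calc |c (u - w) u v + c w (u - w) v| ≤ |c (u - w) u v| + |c w (u - w) v| := abs_add_le _ _
    _ ≤ C * ‖u - w‖ * ‖u‖ * ‖v‖ + C * ‖w‖ * ‖u - w‖ * ‖v‖ := add_le_add (hc _ _ _) (hc _ _ _)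
    _ = (C * ‖u‖ + C * ‖w‖) * ‖u - w‖ * ‖v‖ := by ring

end NormedSpace

section Residual

variable {V Q : Type*} [SeminormedAddCommGroup V] [InnerProductSpace ℝ V]
  [SeminormedAddCommGroup Q] [NormedSpace ℝ Q]

/-- The residual functional `R^{NS}[(u - u_h, p - p_h), (v, q)]` of the stationary Navier–Stokes
equations, with the viscous form `ν⟪·, ·⟫`. It is a function of `u` and `u_h` separately, since the
convection terms do not depend on `u - u_h` alone. -/
noncomputable def nsResidual (ν : ℝ) (b : V →L[ℝ] Q →L[ℝ] ℝ) (c : V →L[ℝ] V →L[ℝ] V →L[ℝ] ℝ)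
    (u uh : V) (p ph : Q) (v : V) (q : Q) : ℝ :=
  ν * ⟪u - uh, v⟫ + b v (p - ph) + b (u - uh) q + convectionDiff c u uh v

variable {ν C : ℝ} {b : V →L[ℝ] Q →L[ℝ] ℝ} {c : V →L[ℝ] V →L[ℝ] V →L[ℝ] ℝ}
  {u uh Φ : V} {p ph : Q}

lemma sub_mul_norm_sq_le_nsResidual_self (hc : ∀ x y z, |c x y z| ≤ C * ‖x‖ * ‖y‖ * ‖z‖)
    (hb : b (u - uh) (p - ph) = 0) (huh : c uh (u - uh) (u - uh) = 0)
    (he : c (u - uh) (u - uh) (u - uh) = 0) :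
    (ν - C * ‖uh‖) * ‖u - uh‖ ^ 2 ≤ nsResidual ν b c u uh p ph (u - uh) 0 := by
  rw [nsResidual, convectionDiff_sub_self huh he, hb, map_zero, real_inner_self_eq_norm_sq]
  linarith [neg_le_of_abs_le (hc (u - uh) uh (u - uh))]

lemma one_sub_mul_norm_sub_le {θ : ℝ} (hν : 0 < ν)
    (hc : ∀ x y z, |c x y z| ≤ C * ‖x‖ * ‖y‖ * ‖z‖) (hb : b (u - uh) (p - ph) = 0)
    (huh : c uh (u - uh) (u - uh) = 0) (he : c (u - uh) (u - uh) (u - uh) = 0)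
    (hθ : C * ‖uh‖ ≤ θ * ν) (hΦ : ν * ⟪Φ, u - uh⟫ = nsResidual ν b c u uh p ph (u - uh) 0) :
    (1 - θ) * ‖u - uh‖ ≤ ‖Φ‖ := by
  rw [← innerSL_apply_norm (𝕜 := ℝ) Φ]
  refine mul_norm_le_opNorm_of_mul_norm_sq_le (le_of_mul_le_mul_left ?_ hν)
  calc ν * ((1 - θ) * ‖u - uh‖ ^ 2) = (ν - θ * ν) * ‖u - uh‖ ^ 2 := by ring
    _ ≤ (ν - C * ‖uh‖) * ‖u - uh‖ ^ 2 := by gcongr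
    _ ≤ nsResidual ν b c u uh p ph (u - uh) 0 := sub_mul_norm_sq_le_nsResidual_self hc hb huh he
    _ = ν * ⟪Φ, u - uh⟫ := hΦ.symm

lemma apply_sub_le_of_inner_eq_nsResidual (hν : 0 ≤ ν)
    (hc : ∀ x y z, |c x y z| ≤ C * ‖x‖ * ‖y‖ * ‖z‖) {v : V}
    (hΦ : ν * ⟪Φ, v⟫ = nsResidual ν b c u uh p ph v 0) :
    b v (p - ph) ≤ (ν * ‖Φ‖ + (ν + C * ‖u‖ + C * ‖uh‖) * ‖u - uh‖) * ‖v‖ := by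
  rw [nsResidual, map_zero] at hΦ
  have hΦv : ν * ⟪Φ, v⟫ ≤ ν * (‖Φ‖ * ‖v‖) := by gcongr; exact real_inner_le_norm Φ v
  have hev : ν * -(‖u - uh‖ * ‖v‖) ≤ ν * ⟪u - uh, v⟫ := by
    gcongr
    exact neg_le_of_abs_le (abs_real_inner_le_norm _ v)
  linarith [neg_le_of_abs_le (abs_convectionDiff_le (u := u) (w := uh) hc v)]

lemma mul_norm_sub_le_of_infSup {β K : ℝ} (hν : 0 ≤ ν) (hK : 0 ≤ K)
    (hβ : β * ‖p - ph‖ ≤ ⨆ v : {v : V // v ≠ 0}, b (v : V) (p - ph) / ‖(v : V)‖)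
    (hc : ∀ x y z, |c x y z| ≤ C * ‖x‖ * ‖y‖ * ‖z‖) (huK : ν + C * ‖u‖ + C * ‖uh‖ ≤ K * ν)
    (hΦ : ∀ v, ν * ⟪Φ, v⟫ = nsResidual ν b c u uh p ph v 0) :
    β * ‖p - ph‖ ≤ ν * (‖Φ‖ + K * ‖u - uh‖) := by
  refine hβ.trans (iSup_div_norm_le (l := fun v ↦ b v (p - ph)) (by positivity) fun v ↦ ?_)
  calc b v (p - ph) ≤ (ν * ‖Φ‖ + (ν + C * ‖u‖ + C * ‖uh‖) * ‖u - uh‖) * ‖v‖ :=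
        apply_sub_le_of_inner_eq_nsResidual hν hc (hΦ v)
    _ ≤ (ν * ‖Φ‖ + K * ν * ‖u - uh‖) * ‖v‖ := by gcongr
    _ = ν * (‖Φ‖ + K * ‖u - uh‖) * ‖v‖ := by ring

end Residual

/-- The constant `C₂` of the upper norm-equivalence bound: the first summand is the contribution of
the velocity error, the second that of the pressure error. The factor `2 + |γ|` bounds
`(ν + Ĉ‖u‖ + Ĉ‖u_h‖) / ν`. -/
noncomputable def residualBoundConst (ν β γ θ : ℝ) : ℝ :=
  (1 - θ)⁻¹ ^ 2 + ν * ((1 + (2 + |γ|) * (1 - θ)⁻¹) / β) ^ 2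

lemma residualBoundConst_pos {ν β γ θ : ℝ} (hν : 0 ≤ ν) (hθ : θ < 1) :
    0 < residualBoundConst ν β γ θ := by
  have : 0 < 1 - θ := sub_pos.mpr hθ
  unfold residualBoundConst
  positivity

lemma mul_sq_add_sq_le_residualBoundConst {ν β γ θ E P F : ℝ} (hν : 0 ≤ ν) (hβ : 0 < β)
    (hθ : θ < 1) (hE₀ : 0 ≤ E) (hP₀ : 0 ≤ P) (hE : (1 - θ) * E ≤ F)
    (hP : β * P ≤ ν * (F + (2 + |γ|) * E)) :
    ν * E ^ 2 + P ^ 2 ≤ residualBoundConst ν β γ θ * (ν * F ^ 2) := by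
  have velocity : E ≤ (1 - θ)⁻¹ * F := (le_inv_mul_iff₀ (sub_pos.mpr hθ)).mpr hE
  have pressure : P ≤ ν * ((1 + (2 + |γ|) * (1 - θ)⁻¹) / β) * F := by
    rw [mul_div_assoc', div_mul_eq_mul_div, le_div_iff₀' hβ]
    calc β * P ≤ ν * (F + (2 + |γ|) * E) := hP
      _ ≤ ν * (F + (2 + |γ|) * ((1 - θ)⁻¹ * F)) := by gcongr
      _ = ν * (1 + (2 + |γ|) * (1 - θ)⁻¹) * F := by ring
  calc ν * E ^ 2 + P ^ 2
      ≤ ν * ((1 - θ)⁻¹ * F) ^ 2 + (ν * ((1 + (2 + |γ|) * (1 - θ)⁻¹) / β) * F) ^ 2 := by gcongr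
    _ = residualBoundConst ν β γ θ * (ν * F ^ 2) := by rw [residualBoundConst]; ring

theorem auxiliary_pressure_vanishes_and_error_bound_general
    {V Q : Type*} [NormedAddCommGroup V] [InnerProductSpace ℝ V]
    [NormedAddCommGroup Q] [InnerProductSpace ℝ Q]
    {ν C β γ θ : ℝ} (hν : 0 < ν) (hβ : 0 < β) (hθ : θ < 1)
    {b : V →L[ℝ] Q →L[ℝ] ℝ} {c : V →L[ℝ] V →L[ℝ] V →L[ℝ] ℝ} {f : V →L[ℝ] ℝ}
    {u uh Φ : V} {p ph ψ : Q}
    (hinf : ∀ q : Q, β * ‖q‖ ≤ ⨆ v : {v : V // v ≠ 0}, b (v : V) q / ‖(v : V)‖)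
    (hc : ∀ w x v : V, |c w x v| ≤ C * ‖w‖ * ‖x‖ * ‖v‖)
    (hskew : ∀ w : V, (∀ q : Q, b w q = 0) → ∀ v : V, c w v v = 0)
    (hγ : C * ‖f‖ / ν ^ 2 = γ)
    (hu : ∀ v : V, ν * ⟪u, v⟫ + c u u v + b v p = f v)
    (hbu : ∀ q : Q, b u q = 0) (hbuh : ∀ q : Q, b uh q = 0) (huh : C * ‖uh‖ ≤ θ * ν)
    (hΦ : ∀ v q, ν * ⟪Φ, v⟫ + ⟪ψ, q⟫ = nsResidual ν b c u uh p ph v q) :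
    ψ = 0 ∧
      ν * ‖u - uh‖ ^ 2 + ‖p - ph‖ ^ 2 ≤
        residualBoundConst ν β γ θ * nsResidual ν b c u uh p ph Φ 0 := by
  have hbe : ∀ q, b (u - uh) q = 0 := fun q ↦ by simp [hbu, hbuh]
  have hψ : ψ = 0 := inner_self_eq_zero.mp <| by
    simpa only [nsResidual, convectionDiff, hbe, inner_zero_right, map_zero, _root_.zero_apply,
      mul_zero, add_zero, sub_self, zero_add] using hΦ 0 ψ
  have hΦ₀ : ∀ v, ν * ⟪Φ, v⟫ = nsResidual ν b c u uh p ph v 0 := fun v ↦ by simpa using hΦ v 0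
  have energy : ν * ‖u‖ ^ 2 ≤ f u := by
    rw [← hu, hskew u hbu, hbu, real_inner_self_eq_norm_sq, add_zero, add_zero]
  have small_u : C * ‖u‖ ≤ |γ| * ν :=
    mul_norm_le_abs_mul_of_mul_norm_sq_le hν hγ energy
  have small_uh : C * ‖uh‖ ≤ ν := huh.trans (mul_le_of_le_one_left hν.le hθ.le)
  have velocity : (1 - θ) * ‖u - uh‖ ≤ ‖Φ‖ :=
    one_sub_mul_norm_sub_le hν hc (hbe _) (hskew uh hbuh _) (hskew _ hbe _) huh (hΦ₀ _)
  have pressure : β * ‖p - ph‖ ≤ ν * (‖Φ‖ + (2 + |γ|) * ‖u - uh‖) :=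
    mul_norm_sub_le_of_infSup hν.le (by positivity) (hinf _) hc (by linarith) hΦ₀
  refine ⟨hψ, ?_⟩
  rw [← hΦ₀, real_inner_self_eq_norm_sq]
  exact mul_sq_add_sq_le_residualBoundConst hν.le hβ hθ (norm_nonneg _) (norm_nonneg _)
    velocity pressure

/-- One has `ψ = 0`, and consequently
`ν‖e_u‖² + ‖e_p‖² ≤ C₂·R^{NS}[(e_u,e_p),(Φ,0)]`, where `C₂` is the constant in
the upper norm-equivalence bound (depending only on `ν`, `Ĉ`, `β`, the
continuity constant of `b`, `γ` and `θ`). -/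
theorem auxiliary_pressure_vanishes_and_error_bound
    {V Q : Type*}
    [NormedAddCommGroup V] [InnerProductSpace ℝ V] [CompleteSpace V]
    [NormedAddCommGroup Q] [InnerProductSpace ℝ Q] [CompleteSpace Q]
    (ν Chat β Cb γ θ : ℝ)
    (hν : 0 < ν) (hβ : 0 < β) (hγ : γ < 1) (hθ0 : 0 ≤ θ) (hθ1 : θ < 1) :
    ∃ C₂ > (0 : ℝ),
      ∀ (b : V →L[ℝ] Q →L[ℝ] ℝ)
        (c : V →L[ℝ] V →L[ℝ] V →L[ℝ] ℝ)
        (f : V →L[ℝ] ℝ)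
        (u uh Φ : V) (p ph ψ : Q),
        ‖b‖ ≤ Cb →
        (∀ q : Q, β * ‖q‖ ≤ ⨆ v : {v : V // v ≠ 0}, b (v : V) q / ‖(v : V)‖) →
        (∀ w x v : V, |c w x v| ≤ Chat * ‖w‖ * ‖x‖ * ‖v‖) →
        (∀ w : V, (∀ q : Q, b w q = 0) → ∀ v : V, c w v v = 0) →
        Chat * ‖f‖ / ν ^ 2 = γ →
        (∀ v : V, ν * ⟪u, v⟫ + c u u v + b v p = f v) →
        (∀ q : Q, b u q = 0) →
        (∀ q : Q, b uh q = 0) →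
        Chat * ‖uh‖ ≤ θ * ν →
        (∀ v : V, ∀ q : Q,
          ν * ⟪Φ, v⟫ + ⟪ψ, q⟫ =
            ν * ⟪u - uh, v⟫ + b v (p - ph) + b (u - uh) q +
              (c u u v - c uh uh v)) →
        ψ = 0 ∧
        ν * ‖u - uh‖ ^ 2 + ‖p - ph‖ ^ 2 ≤
          C₂ * (ν * ⟪u - uh, Φ⟫ + b Φ (p - ph) + b (u - uh) (0 : Q) +
            (c u u Φ - c uh uh Φ)) := by
  refine ⟨residualBoundConst ν β γ θ, residualBoundConst_pos hν.le hθ1, ?_⟩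
  intro b c f u uh Φ p ph ψ _
  exact auxiliary_pressure_vanishes_and_error_bound_general hν hβ hθ1
end
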